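/- Fix integers d ≥ 1, n ≥ 2 and dimensions u > v_0 > v_1 > ⋯ > v_{d−1} > 0. Let R be the set of representations (e, A_p, f_q, B_{p,q}) of F_{d,n} with e and all A_p injective, and let the group G = ∏_{p=0}^{d−1} GL(v_p,ℂ) act on R by (g_0,…,g_{d−1})·(e, A_p, f_q, B_{p,q}) = (e∘g_0^{−1}, g_{p−1}∘A_p∘g_p^{−1}, g_0∘f_q, g_p∘B_{p,q}∘g_{p−1}^{−1}). Then the map sending a representation to (E_0,…,E_{d−1}, φ_1,…,φ_{n−1}), where E_p = Im(e∘A_1∘⋯∘A_p) and φ_q = e∘f_q ∈ End(ℂ^u), induces a bijection from the orbit space R/G onto the set of tuples (E_•, φ_•) in which E_{d−1} ⊆ ⋯ ⊆ E_0 ⊆ ℂ^u is a flag of subspaces with dim E_p = v_p and each φ_q ∈ End(ℂ^u) satisfies Im φ_q ⊆ E_0, φ_q(E_{p−1}) ⊆ E_p for p = 1,…,d−1, and φ_q(E_{d−1}) = 0. -/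

import Mathlib

noncomputable section

/-- Inclusion `Fin (d-1) → Fin d`, `p ↦ p`. -/
def idxLo {d : ℕ} (p : Fin (d - 1)) : Fin d := ⟨p.val, by have := p.isLt; omega⟩

/-- Inclusion `Fin (d-1) → Fin d`, `p ↦ p + 1`. -/
def idxHi {d : ℕ} (p : Fin (d - 1)) : Fin d := ⟨p.val + 1, by have := p.isLt; omega⟩

/-- A representation `(e, A_p, f_q, B_{p,q})` of `F_{d,n}` with `e` and all `A_p` injective.
Here `A p` is the paper's `A_{p+1}`, `f q` the paper's `f_{q+1}` and `B p q` the paper's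
`B_{p+1,q+1}`. -/
structure Rep5 (d n u : ℕ) (v : ℕ → ℕ) where
  e : (Fin (v 0) → ℂ) →ₗ[ℂ] (Fin u → ℂ)
  A : (p : Fin (d - 1)) → (Fin (v (p.val + 1)) → ℂ) →ₗ[ℂ] (Fin (v p.val) → ℂ)
  f : (q : Fin (n - 1)) → (Fin u → ℂ) →ₗ[ℂ] (Fin (v 0) → ℂ)
  B : (p : Fin (d - 1)) → (q : Fin (n - 1)) →
    (Fin (v p.val) → ℂ) →ₗ[ℂ] (Fin (v (p.val + 1)) → ℂ)
  rel1 : d = 1 → ∀ q, (f q).comp e = 0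
  rel2 : ∀ (hd : 2 ≤ d) (q : Fin (n - 1)),
    (A ⟨0, by omega⟩).comp (B ⟨0, by omega⟩ q) + (f q).comp e = 0
  rel3 : ∀ (p : ℕ) (hp : p + 2 < d) (q : Fin (n - 1)),
    (A ⟨p + 1, by omega⟩).comp (B ⟨p + 1, by omega⟩ q)
      = (B ⟨p, by omega⟩ q).comp (A ⟨p, by omega⟩)
  rel4 : ∀ (hd : 2 ≤ d) (q : Fin (n - 1)),
    (B ⟨d - 2, by omega⟩ q).comp (A ⟨d - 2, by omega⟩) = 0
  einj : Function.Injective e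
  Ainj : ∀ p, Function.Injective (A p)

/-- The orbit relation of the action of `G = ∏_{p=0}^{d−1} GL(v_p, ℂ)`:
`(g_p)·(e, A_p, f_q, B_{p,q}) = (e∘g₀⁻¹, g_{p−1}∘A_p∘g_p⁻¹, g₀∘f_q, g_p∘B_{p,q}∘g_{p−1}⁻¹)`. -/
def GRel5 (d n u : ℕ) (hd : 1 ≤ d) (v : ℕ → ℕ) (x y : Rep5 d n u v) : Prop :=
  ∃ g : (p : Fin d) → ((Fin (v p.val) → ℂ) ≃ₗ[ℂ] (Fin (v p.val) → ℂ)),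
    y.e = x.e.comp (g ⟨0, hd⟩).symm.toLinearMap ∧
    (∀ p, y.A p = (g (idxLo p)).toLinearMap.comp
      ((x.A p).comp (g (idxHi p)).symm.toLinearMap)) ∧
    (∀ q, y.f q = (g ⟨0, hd⟩).toLinearMap.comp (x.f q)) ∧
    (∀ p q, y.B p q = (g (idxHi p)).toLinearMap.comp
      ((x.B p q).comp (g (idxLo p)).symm.toLinearMap))

/-- `chain5 x p = e ∘ A₁ ∘ ⋯ ∘ A_p : ℂ^{v_p} → ℂ^u` (junk `0` beyond the relevant range). -/
def chain5 (d n u : ℕ) (v : ℕ → ℕ) (x : Rep5 d n u v) :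
    (p : ℕ) → (Fin (v p) → ℂ) →ₗ[ℂ] (Fin u → ℂ)
  | 0 => x.e
  | p + 1 => if h : p < d - 1 then (chain5 d n u v x p).comp (x.A ⟨p, h⟩) else 0

/-- Nakajima's description of the total space of `T^∨Fl(v,u)^{⊕(n−1)}`: tuples
`(E₀,…,E_{d−1}, φ₁,…,φ_{n−1})` where `E_•` is a flag of subspaces of `ℂ^u` with
`dim E_p = v_p` and each `φ_q ∈ End(ℂ^u)` satisfies `Im φ_q ⊆ E₀`,
`φ_q(E_{p−1}) ⊆ E_p` and `φ_q(E_{d−1}) = 0`. -/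
def FlagPhi (d n u : ℕ) (hd : 1 ≤ d) (v : ℕ → ℕ) : Type :=
  {EΦ : (Fin d → Submodule ℂ (Fin u → ℂ)) ×
      (Fin (n - 1) → (Fin u → ℂ) →ₗ[ℂ] (Fin u → ℂ)) //
    (∀ p, Module.finrank ℂ (EΦ.1 p) = v p.val) ∧
    (∀ p : Fin (d - 1), EΦ.1 (idxHi p) ≤ EΦ.1 (idxLo p)) ∧
    (∀ q y, EΦ.2 q y ∈ EΦ.1 ⟨0, hd⟩) ∧
    (∀ (q : Fin (n - 1)) (p : Fin (d - 1)), ∀ x ∈ EΦ.1 (idxLo p), EΦ.2 q x ∈ EΦ.1 (idxHi p)) ∧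
    (∀ q : Fin (n - 1), ∀ x ∈ EΦ.1 ⟨d - 1, by omega⟩, EΦ.2 q x = 0)}

theorem factor5 {V W U : Type*} [AddCommGroup V] [Module ℂ V] [AddCommGroup W] [Module ℂ W]
    [AddCommGroup U] [Module ℂ U] (c : V →ₗ[ℂ] U) (hc : Function.Injective c) (h : W →ₗ[ℂ] U)
    (hr : ∀ w, h w ∈ LinearMap.range c) : ∃ k : W →ₗ[ℂ] V, ∀ w, c (k w) = h w := by
  refine ⟨(LinearEquiv.ofInjective c hc).symm.toLinearMap.comp
    (h.codRestrict (LinearMap.range c) hr), fun w => ?_⟩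
  have := LinearEquiv.apply_symm_apply (LinearEquiv.ofInjective c hc)
    (h.codRestrict (LinearMap.range c) hr w)
  exact congrArg Subtype.val this

theorem equiv5 {V U : Type*} [AddCommGroup V] [Module ℂ V]
    [AddCommGroup U] [Module ℂ U] (c c' : V →ₗ[ℂ] U) (hc : Function.Injective c)
    (hc' : Function.Injective c') (hr : LinearMap.range c = LinearMap.range c') :
    ∃ g : V ≃ₗ[ℂ] V, ∀ w, c' (g w) = c w := by
  refine ⟨(LinearEquiv.ofInjective c hc).trans ((LinearEquiv.ofEq _ _ hr).trans
    (LinearEquiv.ofInjective c' hc').symm), fun w => ?_⟩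
  have := LinearEquiv.apply_symm_apply (LinearEquiv.ofInjective c' hc')
    (LinearEquiv.ofEq _ _ hr (LinearEquiv.ofInjective c hc w))
  exact congrArg Subtype.val this

theorem param5 {u m : ℕ} (E : Submodule ℂ (Fin u → ℂ)) (h : Module.finrank ℂ E = m) :
    ∃ c : (Fin m → ℂ) →ₗ[ℂ] (Fin u → ℂ), Function.Injective c ∧ LinearMap.range c = E := by
  have g : (Fin m → ℂ) ≃ₗ[ℂ] E := LinearEquiv.ofFinrankEq _ _ (by simp [h])
  refine ⟨E.subtype.comp g.toLinearMap, ?_, ?_⟩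
  · exact E.injective_subtype.comp g.injective
  · rw [LinearMap.range_comp, LinearEquiv.range]; simp

theorem chain5_succ {d n u : ℕ} {v : ℕ → ℕ} (x : Rep5 d n u v) (p : ℕ) (h : p < d - 1)
    (w : Fin (v (p + 1)) → ℂ) :
    chain5 d n u v x (p + 1) w = chain5 d n u v x p (x.A ⟨p, h⟩ w) := by
  simp [chain5, h]

theorem chain5_inj {d n u : ℕ} {v : ℕ → ℕ} (x : Rep5 d n u v) (p : ℕ) (h : p < d) :
    Function.Injective (chain5 d n u v x p) := by
  induction p with
  | zero => exact x.einj
  | succ p ih =>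
    intro a b hab
    rw [chain5_succ x p (by omega), chain5_succ x p (by omega)] at hab
    exact x.Ainj _ (ih (by omega) hab)

theorem chain5_phi {d n u : ℕ} {v : ℕ → ℕ} (x : Rep5 d n u v) (q : Fin (n - 1)) (p : ℕ)
    (h : p < d - 1) (w : Fin (v p) → ℂ) :
    x.e (x.f q (chain5 d n u v x p w)) = - chain5 d n u v x (p + 1) (x.B ⟨p, h⟩ q w) := by
  induction p with
  | zero =>
    rw [chain5_succ x 0 h]
    have := LinearMap.congr_fun (x.rel2 (by omega) q) w
    simp only [LinearMap.add_apply, LinearMap.comp_apply, LinearMap.zero_apply] at this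
    show x.e (x.f q (x.e w)) = - x.e _
    rw [← map_neg, eq_neg_of_add_eq_zero_right this]
  | succ p ih =>
    have := LinearMap.congr_fun (x.rel3 p (by omega) q) w
    simp only [LinearMap.comp_apply] at this
    rw [chain5_succ x p (by omega), ih (by omega), chain5_succ x (p + 1) h, this]

theorem chain5_last {d n u : ℕ} {v : ℕ → ℕ} (hd : 1 ≤ d) (x : Rep5 d n u v) (q : Fin (n - 1))
    (w : Fin (v (d - 1)) → ℂ) :
    x.e (x.f q (chain5 d n u v x (d - 1) w)) = 0 := by
  obtain rfl | ⟨k, rfl⟩ : d = 1 ∨ ∃ k, d = k + 2 := by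
    rcases Nat.lt_or_ge d 2 with h | h
    · left; omega
    · right; exact ⟨d - 2, by omega⟩
  · have := LinearMap.congr_fun (x.rel1 rfl q) w
    show x.e (x.f q (x.e w)) = 0
    simp only [LinearMap.comp_apply, LinearMap.zero_apply] at this
    rw [this, map_zero]
  · have h4 := LinearMap.congr_fun (x.rel4 (by omega) q) w
    simp only [LinearMap.comp_apply, LinearMap.zero_apply] at h4
    have h1 := chain5_succ x k (by omega) w
    have h2 := chain5_phi x q k (by omega) (x.A ⟨k, by omega⟩ w)
    show x.e (x.f q (chain5 (k + 2) n u v x (k + 1) w)) = 0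
    rw [h1, h2]
    have h5 : x.B ⟨k, by omega⟩ q (x.A ⟨k, by omega⟩ w) = 0 := h4
    rw [h5, map_zero, neg_zero]

/-- The map on representations. -/
def toFlag5 (d n u : ℕ) (hd : 1 ≤ d) (v : ℕ → ℕ) (x : Rep5 d n u v) : FlagPhi d n u hd v :=
  ⟨(fun p : Fin d => LinearMap.range (chain5 d n u v x p.val),
    fun q : Fin (n - 1) => x.e.comp (x.f q)), by
    refine ⟨fun p => ?_, fun p => ?_, fun q y => ?_, fun q p => ?_, fun q => ?_⟩
    · rw [LinearMap.finrank_range_of_inj (chain5_inj x p.val p.isLt)]; simp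
    · rintro _ ⟨w, rfl⟩
      exact ⟨_, (chain5_succ x p.val p.isLt w).symm⟩
    · exact ⟨x.f q y, rfl⟩
    · rintro _ ⟨w, rfl⟩
      refine ⟨- x.B p q w, ?_⟩
      exact (map_neg (chain5 d n u v x (p.val + 1)) (x.B p q w)).trans
        (chain5_phi x q p.val p.isLt w).symm
    · rintro _ ⟨w, rfl⟩
      exact chain5_last hd x q w⟩

theorem toFlag5_rel (d n u : ℕ) (hd : 1 ≤ d) (v : ℕ → ℕ) (x y : Rep5 d n u v)
    (h : GRel5 d n u hd v x y) : toFlag5 d n u hd v x = toFlag5 d n u hd v y := by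
  obtain ⟨g, he, hA, hf, hB⟩ := h
  have key : ∀ (p : ℕ) (hp : p < d) w,
      chain5 d n u v y p w = chain5 d n u v x p ((g ⟨p, hp⟩).symm w) := by
    intro p
    induction p with
    | zero =>
      intro hp w
      show y.e w = x.e _
      rw [he]; rfl
    | succ p ih =>
      intro hp w
      rw [chain5_succ y p (by omega), chain5_succ x p (by omega), ih (by omega), hA]
      simp [idxLo, idxHi]
      rfl
  apply Subtype.ext
  refine Prod.ext (funext fun p => ?_) (funext fun q => ?_)
  · show LinearMap.range (chain5 d n u v x p.val) = LinearMap.range (chain5 d n u v y p.val)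
    ext z
    constructor
    · rintro ⟨w, rfl⟩
      exact ⟨g p w, by rw [key p.val p.isLt]; simp⟩
    · rintro ⟨w, rfl⟩
      exact ⟨_, (key p.val p.isLt w).symm⟩
  · show x.e.comp (x.f q) = y.e.comp (y.f q)
    rw [he, hf]
    refine LinearMap.ext fun w => ?_
    simp

theorem toFlag5_inj (d n u : ℕ) (hd : 1 ≤ d) (v : ℕ → ℕ) (x y : Rep5 d n u v)
    (h : toFlag5 d n u hd v x = toFlag5 d n u hd v y) : GRel5 d n u hd v x y := by
  have h0 := congrArg Subtype.val h
  have hE : ∀ p : Fin d, LinearMap.range (chain5 d n u v x p.val)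
      = LinearMap.range (chain5 d n u v y p.val) := fun p => congrFun (congrArg Prod.fst h0) p
  have hφ : ∀ q w, x.e (x.f q w) = y.e (y.f q w) := fun q w =>
    LinearMap.congr_fun (congrFun (congrArg Prod.snd h0) q) w
  choose g hg using fun p : Fin d => equiv5 _ _ (chain5_inj x p.val p.isLt)
    (chain5_inj y p.val p.isLt) (hE p)
  refine ⟨g, ?_, fun p => ?_, fun q => ?_, fun p q => ?_⟩
  · refine LinearMap.ext fun w => ?_
    have := hg ⟨0, hd⟩ ((g ⟨0, hd⟩).symm w)
    rw [LinearEquiv.apply_symm_apply] at this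
    exact this
  · refine LinearMap.ext fun w => ?_
    obtain ⟨w, rfl⟩ := (g (idxHi p)).surjective w
    apply chain5_inj y p.val (idxLo p).isLt
    have h1 := hg (idxHi p) w
    have h2 := hg (idxLo p) (x.A p w)
    have h3 := chain5_succ x p.val p.isLt w
    have h4 := chain5_succ y p.val p.isLt (g (idxHi p) w)
    exact (h4.symm.trans (h1.trans (h3.trans h2.symm))).trans
      (congrArg (fun z => chain5 d n u v y p.val (g (idxLo p) (x.A p z)))
        ((g (idxHi p)).symm_apply_apply w).symm)
  · refine LinearMap.ext fun w => ?_
    apply y.einj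
    exact (hφ q w).symm.trans (hg ⟨0, hd⟩ (x.f q w)).symm
  · refine LinearMap.ext fun w => ?_
    obtain ⟨w, rfl⟩ := (g (idxLo p)).surjective w
    apply chain5_inj y (p.val + 1) (idxHi p).isLt
    have h1 := hg (idxLo p) w
    have h2 := hg (idxHi p) (x.B p q w)
    have h3 := chain5_phi x q p.val p.isLt w
    have h4 := chain5_phi y q p.val p.isLt (g (idxLo p) w)
    have h5 := hφ q (chain5 d n u v x p.val w)
    have h6 : y.e (y.f q (chain5 d n u v y p.val (g (idxLo p) w)))
        = y.e (y.f q (chain5 d n u v x p.val w)) := congrArg (fun z => y.e (y.f q z)) h1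
    exact ((neg_injective (h4.symm.trans (h6.trans (h5.symm.trans h3)))).trans h2.symm).trans
      (congrArg (fun z => chain5 d n u v y (p.val + 1) (g (idxHi p) (x.B p q z)))
        ((g (idxLo p)).symm_apply_apply w).symm)

theorem toFlag5_surj (d n u : ℕ) (hd : 1 ≤ d) (v : ℕ → ℕ) (T : FlagPhi d n u hd v) :
    ∃ x, toFlag5 d n u hd v x = T := by
  obtain ⟨⟨E, φ⟩, hdim, hflag, him, hstep, hlast⟩ := T
  dsimp only at hdim hflag him hstep hlast
  have hex : ∀ p : ℕ, ∃ c : (Fin (v p) → ℂ) →ₗ[ℂ] (Fin u → ℂ), ∀ hp : p < d,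
      Function.Injective c ∧ LinearMap.range c = E ⟨p, hp⟩ := by
    intro p
    by_cases hp : p < d
    · obtain ⟨c, h⟩ := param5 (E ⟨p, hp⟩) (hdim ⟨p, hp⟩)
      exact ⟨c, fun _ => h⟩
    · exact ⟨0, fun h => absurd h hp⟩
  choose c hc using hex
  have cinj : ∀ p, p < d → Function.Injective (c p) := fun p hp => (hc p hp).1
  have cran : ∀ p (hp : p < d), LinearMap.range (c p) = E ⟨p, hp⟩ := fun p hp => (hc p hp).2
  have cmem : ∀ p (hp : p < d) w, c p w ∈ E ⟨p, hp⟩ := fun p hp w => by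
    rw [← cran p hp]; exact ⟨w, rfl⟩
  have exA : ∀ p : Fin (d - 1), ∃ k : (Fin (v (p.val + 1)) → ℂ) →ₗ[ℂ] (Fin (v p.val) → ℂ),
      ∀ w, c p.val (k w) = c (p.val + 1) w := fun p =>
    factor5 _ (cinj p.val (idxLo p).isLt) _ (fun w => by
      rw [cran p.val (idxLo p).isLt]
      exact hflag p (cmem (p.val + 1) (idxHi p).isLt w))
  choose A hA using exA
  have exf : ∀ q : Fin (n - 1), ∃ k : (Fin u → ℂ) →ₗ[ℂ] (Fin (v 0) → ℂ),
      ∀ w, c 0 (k w) = φ q w := fun q =>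
    factor5 _ (cinj 0 hd) _ (fun w => by
      rw [cran 0 hd]; exact him q w)
  choose f hf using exf
  have exB : ∀ (p : Fin (d - 1)) (q : Fin (n - 1)),
      ∃ k : (Fin (v p.val) → ℂ) →ₗ[ℂ] (Fin (v (p.val + 1)) → ℂ),
      ∀ w, c (p.val + 1) (k w) = (-((φ q).comp (c p.val))) w := fun p q =>
    factor5 _ (cinj (p.val + 1) (idxHi p).isLt) _ (fun w => by
      rw [cran (p.val + 1) (idxHi p).isLt]
      exact Submodule.neg_mem _ (hstep q p _ (cmem p.val (idxLo p).isLt w)))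
  choose B hB using exB
  simp only [LinearMap.neg_apply, LinearMap.comp_apply] at hB
  have hA' : ∀ (p : ℕ) (hp : p < d - 1) w, c p (A ⟨p, hp⟩ w) = c (p + 1) w :=
    fun p hp w => hA ⟨p, hp⟩ w
  have hB' : ∀ (p : ℕ) (hp : p < d - 1) q w, c (p + 1) (B ⟨p, hp⟩ q w) = - φ q (c p w) :=
    fun p hp q w => hB ⟨p, hp⟩ q w
  let x : Rep5 d n u v :=
    { e := c 0
      A := A
      f := f
      B := B
      rel1 := by
        intro h1 q
        refine LinearMap.ext fun w => ?_
        apply cinj 0 hd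
        subst h1
        show c 0 (f q (c 0 w)) = c 0 0
        rw [hf, map_zero]
        exact hlast q _ (cmem 0 hd w)
      rel2 := by
        intro h2 q
        refine LinearMap.ext fun w => ?_
        apply cinj 0 hd
        show c 0 (A ⟨0, _⟩ (B ⟨0, _⟩ q w) + f q (c 0 w)) = c 0 0
        rw [map_add, hA' 0, hB' 0, hf, map_zero, neg_add_cancel]
      rel3 := by
        intro p hp q
        refine LinearMap.ext fun w => ?_
        apply cinj (p + 1) (by omega)
        show c (p + 1) (A ⟨p + 1, _⟩ (B ⟨p + 1, _⟩ q w)) = c (p + 1) (B ⟨p, _⟩ q (A ⟨p, _⟩ w))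
        rw [hA' (p + 1), hB' (p + 1), hB' p, hA' p]
      rel4 := by
        intro h2 q
        obtain ⟨k, rfl⟩ : ∃ k, d = k + 2 := ⟨d - 2, by omega⟩
        refine LinearMap.ext fun w => ?_
        apply cinj (k + 1) (by omega)
        show c (k + 1) (B ⟨k, _⟩ q (A ⟨k, _⟩ w)) = c (k + 1) 0
        rw [hB' k, hA' k, map_zero, neg_eq_zero]
        exact hlast q _ (cmem (k + 1) (by omega) w)
      einj := cinj 0 hd
      Ainj := by
        intro p a b hab
        apply cinj (p.val + 1) (idxHi p).isLt
        rw [← hA, ← hA, hab] }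
  have hch : ∀ p, p < d → chain5 d n u v x p = c p := by
    intro p
    induction p with
    | zero => intro _; rfl
    | succ p ih =>
      intro hp
      refine LinearMap.ext fun w => ?_
      rw [chain5_succ x p (by omega), ih (by omega)]
      exact hA' p _ w
  refine ⟨x, Subtype.ext (Prod.ext (funext fun p => ?_) (funext fun q => ?_))⟩
  · show LinearMap.range (chain5 d n u v x p.val) = E p
    rw [hch p.val p.isLt, cran p.val p.isLt]
  · refine LinearMap.ext fun w => ?_
    exact hf q w

/-- Proposition 7.2 for `n ≥ 2`: the map sending a representation to
`(E₀,…,E_{d−1}, φ₁,…,φ_{n−1})`, with `E_p = Im(e∘A₁∘⋯∘A_p)` and `φ_q = e∘f_q`, induces a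
bijection from the orbit space `R/G` onto the set of tuples `(E_•, φ_•)` described by
`FlagPhi`, i.e. onto `T^∨Fl(v,u)^{⊕(n−1)}`. -/
theorem orbit_space_equiv_cotangent_flag (d n u : ℕ) (hd : 1 ≤ d) (hn : 2 ≤ n)
    (v : ℕ → ℕ) (hu : v 0 < u) (hv : ∀ p, p + 1 < d → v (p + 1) < v p)
    (hpos : 0 < v (d - 1)) :
    ∃ bij : Quot (GRel5 d n u hd v) ≃ FlagPhi d n u hd v,
      ∀ x : Rep5 d n u v,
        (bij (Quot.mk _ x)).val
          = (fun p : Fin d => LinearMap.range (chain5 d n u v x p.val),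
             fun q : Fin (n - 1) => x.e.comp (x.f q)) := by
  refine ⟨Equiv.ofBijective (Quot.lift (toFlag5 d n u hd v) (toFlag5_rel d n u hd v)) ⟨?_, ?_⟩,
    fun x => rfl⟩
  · rintro ⟨x⟩ ⟨y⟩ h
    exact Quot.sound (toFlag5_inj d n u hd v x y h)
  · intro T
    obtain ⟨x, hx⟩ := toFlag5_surj d n u hd v T
    exact ⟨Quot.mk _ x, hx⟩

end
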